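/- The first Rayleigh quotient of the Dirichlet Laplacian on the Fichera layer admits the lower bound λ₁(Λ) ≥ inf_{L>−1} μ(L), where λ₁(Λ)=inf{∫_Λ|∇u|²dx / ∫_Λ|u|²dx : 0≠u∈H¹₀(Λ)} and μ(L) is the Sturm–Liouville ground energy μ(L):=inf{∫_L^∞(|q'(t)|²+λ(t)|q(t)|²)dt / ∫_L^∞|q(t)|²dt : 0≠q∈H¹(L,∞)} with potential λ(t):=λ₁(Γ_t). -/

import Mathlib

/-!
Up to the null set where two coordinates agree, `Λ` is the disjoint union of the three parts on
which a given coordinate is the largest, and coordinate permutations identify these parts with one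
another. So it suffices to bound the energy of a test function `u` by `inf μ` times its mass on the
part `x₃ > max(x₁,x₂)` (`OmP_bound`).

The section of this part at height `x₃ = t` is the finite guide `Γ_t`, and `u(·,·,t)` vanishes on
the Dirichlet boundary of `Γ_t`; hence the horizontal energy `∫ (∂₁u)² + (∂₂u)²` is at least
`∫ λ(x₃) u²` (`cross_section_bound`). The fibre over `(x₁,x₂) ∈ Γ` is the half-line `(L,∞)` with
`L = max(x₁,x₂) > -1`, and `u(x₁,x₂,·)` is a trial function for `μ(L)`; hence
`∫ (∂₃u)² + λ(x₃) u²` is at least `inf μ · ∫ u²` (`sturm_liouville_bound`).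

Tonelli's theorem needs the potential `λ` to be measurable. If `inf μ ≤ 0` there is nothing to
prove. Otherwise every energy density `(q')² + λ q²` is integrable, since a non-integrable one would
have Bochner integral `0` and give `μ(L) ≤ 0`; taking cutoffs for `q` shows that `λ` is
almost everywhere measurable on `(-1,∞)` (`lamR_aemeasurable`).
-/

noncomputable section
open MeasureTheory Set Real

/-- The interval `I = (-1,0)`. -/
def II : Set ℝ := Set.Ioo (-1) 0

/-- The broken guide `Γ = {x ∈ ℝ² : -1 < min(x₁,x₂) < 0}`. -/
def Gam : Set (ℝ × ℝ) := {p | -1 < min p.1 p.2 ∧ min p.1 p.2 < 0}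

/-- The box `□_L = {x : max(|x₁+1|,|x₂+1|) < L}`. -/
def Box (L : ℝ) : Set (ℝ × ℝ) := {p | |p.1 + 1| < L ∧ |p.2 + 1| < L}

/-- The finite guide `Γ_R = Γ ∩ □_{R+1}`. -/
def GamR (R : ℝ) : Set (ℝ × ℝ) := Gam ∩ Box (R + 1)

/-- The Neumann part `Σ_R = ∂Γ_R ∩ ∂□_{R+1}` of the boundary. -/
def Sig (R : ℝ) : Set (ℝ × ℝ) := frontier (GamR R) ∩ frontier (Box (R + 1))

/-- The Dirichlet part `∂Γ_R ∖ Σ_R` of the boundary. -/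
def DirB (R : ℝ) : Set (ℝ × ℝ) := frontier (GamR R) \ Sig R

/-- Squared gradient `|∇u|² = (∂₁u)² + (∂₂u)²`. -/
def gradSq2 (u : ℝ × ℝ → ℝ) (p : ℝ × ℝ) : ℝ :=
  (fderiv ℝ u p (1, 0)) ^ 2 + (fderiv ℝ u p (0, 1)) ^ 2

/-- Admissible functions for the mixed problem on `Γ_R`: `C¹` up to the boundary
(modelled by a globally `C¹` extension) vanishing on the Dirichlet part. -/
def AdmR (R : ℝ) (u : ℝ × ℝ → ℝ) : Prop :=
  ContDiff ℝ 1 u ∧ ∀ p ∈ DirB R, u p = 0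

/-- First Rayleigh quotient `λ₁(Γ_R)` of the mixed Dirichlet–Neumann Laplacian on `Γ_R`. -/
def lamR (R : ℝ) : ℝ :=
  sInf {r | ∃ u : ℝ × ℝ → ℝ, AdmR R u ∧ (∫ p in GamR R, (u p) ^ 2) ≠ 0 ∧
    r = (∫ p in GamR R, gradSq2 u p) / ∫ p in GamR R, (u p) ^ 2}

/-- First Rayleigh quotient `λ₁(Γ)` of the Dirichlet Laplacian on the broken guide `Γ`. -/
def lamG : ℝ :=
  sInf {r | ∃ u : ℝ × ℝ → ℝ, ContDiff ℝ 1 u ∧ HasCompactSupport u ∧ tsupport u ⊆ Gam ∧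
    (∫ p in Gam, (u p) ^ 2) ≠ 0 ∧
    r = (∫ p in Gam, gradSq2 u p) / ∫ p in Gam, (u p) ^ 2}

/-- `ω = √(π² − λ₁(Γ))`. -/
def omega : ℝ := Real.sqrt (π ^ 2 - lamG)

/-- The Fichera layer `Λ = {x ∈ ℝ³ : -1 < min(x₁,x₂,x₃) < 0}`. -/
def Lam3 : Set (ℝ × ℝ × ℝ) :=
  {x | -1 < min x.1 (min x.2.1 x.2.2) ∧ min x.1 (min x.2.1 x.2.2) < 0}

/-- The residual domain `Ω_R³ = {x : x₃ > R and (x₁,x₂) ∈ Γ_{x₃}}`. -/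
def Om3 (R : ℝ) : Set (ℝ × ℝ × ℝ) := {x | R < x.2.2 ∧ (x.1, x.2.1) ∈ GamR x.2.2}

/-- Squared gradient in 3D: `|∇u|² = (∂₁u)² + (∂₂u)² + (∂₃u)²`. -/
def gradSq3 (u : ℝ × ℝ × ℝ → ℝ) (x : ℝ × ℝ × ℝ) : ℝ :=
  (fderiv ℝ u x (1, 0, 0)) ^ 2 + (fderiv ℝ u x (0, 1, 0)) ^ 2 + (fderiv ℝ u x (0, 0, 1)) ^ 2

/-- Ground energy `μ(L)` of the Sturm–Liouville operator `q ↦ -q'' + λ q` on `(L,∞)`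
with Neumann condition at `L` and potential `λ(t) = λ₁(Γ_t)`, defined as the infimum of
Rayleigh quotients over (`C¹` representatives of) `H¹(L,∞)`. -/
def muSL (L : ℝ) : ℝ :=
  sInf {r | ∃ q : ℝ → ℝ, ContDiff ℝ 1 q ∧
    IntegrableOn (fun t => (q t) ^ 2) (Set.Ioi L) ∧
    IntegrableOn (fun t => (deriv q t) ^ 2) (Set.Ioi L) ∧
    (∫ t in Set.Ioi L, (q t) ^ 2) ≠ 0 ∧
    r = (∫ t in Set.Ioi L, ((deriv q t) ^ 2 + lamR t * (q t) ^ 2)) /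
      ∫ t in Set.Ioi L, (q t) ^ 2}

/-- First Rayleigh quotient `λ₁(Λ)` of the Dirichlet Laplacian on the Fichera layer. -/
def lamLam : ℝ :=
  sInf {r | ∃ u : ℝ × ℝ × ℝ → ℝ, ContDiff ℝ 1 u ∧ HasCompactSupport u ∧
    tsupport u ⊆ Lam3 ∧ (∫ x in Lam3, (u x) ^ 2) ≠ 0 ∧
    r = (∫ x in Lam3, gradSq3 u x) / ∫ x in Lam3, (u x) ^ 2}

open scoped ENNReal

/-! ### The domains -/

lemma mem_GamR_iff {p : ℝ × ℝ} {t : ℝ} :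
    p ∈ GamR t ↔ -1 < p.1 ∧ -1 < p.2 ∧ (p.1 < 0 ∨ p.2 < 0) ∧ p.1 < t ∧ p.2 < t := by
  simp only [GamR, Gam, Box, mem_inter_iff, mem_ofPred_eq, lt_min_iff, min_lt_iff, abs_lt]
  constructor
  · rintro ⟨⟨⟨h1, h2⟩, h3⟩, ⟨_, h4⟩, ⟨_, h5⟩⟩
    exact ⟨h1, h2, h3, by linarith, by linarith⟩
  · rintro ⟨h1, h2, h3, h4, h5⟩
    exact ⟨⟨⟨h1, h2⟩, h3⟩, ⟨by linarith, by linarith⟩, ⟨by linarith, by linarith⟩⟩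

lemma isOpen_Gam : IsOpen Gam := by
  have h : Continuous fun p : ℝ × ℝ => min p.1 p.2 := by fun_prop
  exact (isOpen_lt continuous_const h).inter (isOpen_lt h continuous_const)

lemma isOpen_Box (L : ℝ) : IsOpen (Box L) :=
  (isOpen_lt (f := fun p : ℝ × ℝ => |p.1 + 1|) (by fun_prop) continuous_const).inter
    (isOpen_lt (f := fun p : ℝ × ℝ => |p.2 + 1|) (by fun_prop) continuous_const)

lemma isOpen_GamR (R : ℝ) : IsOpen (GamR R) := isOpen_Gam.inter (isOpen_Box _)

lemma isOpen_Lam3 : IsOpen Lam3 := by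
  have h : Continuous fun x : ℝ × ℝ × ℝ => min x.1 (min x.2.1 x.2.2) := by fun_prop
  exact (isOpen_lt continuous_const h).inter (isOpen_lt h continuous_const)

/-! ### Rayleigh quotients in dimensions one and two -/

lemma gradSq2_nonneg (u : ℝ × ℝ → ℝ) (p : ℝ × ℝ) : 0 ≤ gradSq2 u p := by
  unfold gradSq2; positivity

lemma gradSq3_nonneg (u : ℝ × ℝ × ℝ → ℝ) (x : ℝ × ℝ × ℝ) : 0 ≤ gradSq3 u x := by
  unfold gradSq3; positivity

lemma lamR_nonneg (R : ℝ) : 0 ≤ lamR R := by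
  refine Real.sInf_nonneg ?_
  rintro r ⟨u, -, -, rfl⟩
  exact div_nonneg (integral_nonneg fun p => gradSq2_nonneg u p)
    (integral_nonneg fun p => sq_nonneg _)

/-- Nonnegativity supplies the lower bound without which `sInf` need not lie below the
Rayleigh quotients defining `muSL L`. -/
lemma muSL_quot_nonneg {L r : ℝ} (h : r ∈ {r | ∃ q : ℝ → ℝ, ContDiff ℝ 1 q ∧
    IntegrableOn (fun t => (q t) ^ 2) (Set.Ioi L) ∧
    IntegrableOn (fun t => (deriv q t) ^ 2) (Set.Ioi L) ∧
    (∫ t in Set.Ioi L, (q t) ^ 2) ≠ 0 ∧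
    r = (∫ t in Set.Ioi L, ((deriv q t) ^ 2 + lamR t * (q t) ^ 2)) /
      ∫ t in Set.Ioi L, (q t) ^ 2}) : 0 ≤ r := by
  obtain ⟨q, -, -, -, -, rfl⟩ := h
  refine div_nonneg (integral_nonneg fun t => ?_) (integral_nonneg fun t => sq_nonneg _)
  have := lamR_nonneg t
  positivity

lemma muSL_nonneg (L : ℝ) : 0 ≤ muSL L :=
  Real.sInf_nonneg fun _ h => muSL_quot_nonneg h

lemma sInf_muSL_le {L : ℝ} (hL : -1 < L) :
    sInf {m | ∃ L : ℝ, -1 < L ∧ m = muSL L} ≤ muSL L := by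
  refine csInf_le ⟨0, ?_⟩ ⟨L, hL, rfl⟩
  rintro _ ⟨L', -, rfl⟩
  exact muSL_nonneg L'

lemma hasCompactSupport_sq {X : Type*} [TopologicalSpace X] {f : X → ℝ}
    (hs : HasCompactSupport f) : HasCompactSupport fun x => (f x) ^ 2 := by
  refine hs.mono' fun x hx => subset_tsupport f fun h => hx ?_
  simp [h]

lemma sq_integrable {X : Type*} [TopologicalSpace X] [MeasurableSpace X]
    [OpensMeasurableSpace X] {μ : Measure X} [IsFiniteMeasureOnCompacts μ] {f : X → ℝ}
    (hf : Continuous f) (hs : HasCompactSupport f) : Integrable (fun x => (f x) ^ 2) μ :=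
  Continuous.integrable_of_hasCompactSupport (hf.pow 2) (hasCompactSupport_sq hs)

lemma deriv_sq_integrable {q : ℝ → ℝ} (hq : ContDiff ℝ 1 q) (hs : HasCompactSupport q) :
    Integrable (fun t => (deriv q t) ^ 2) :=
  sq_integrable (hq.continuous_deriv le_rfl) hs.deriv

lemma sInf_muSL_le_quot {L : ℝ} (hL : -1 < L) {q : ℝ → ℝ} (hq : ContDiff ℝ 1 q)
    (hs : HasCompactSupport q) (h0 : (∫ t in Ioi L, (q t) ^ 2) ≠ 0) :
    sInf {m | ∃ L : ℝ, -1 < L ∧ m = muSL L} ≤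
      (∫ t in Ioi L, ((deriv q t) ^ 2 + lamR t * (q t) ^ 2)) / ∫ t in Ioi L, (q t) ^ 2 := by
  refine (sInf_muSL_le hL).trans (csInf_le ⟨0, fun _ h => muSL_quot_nonneg h⟩ ?_)
  exact ⟨q, hq, (sq_integrable hq.continuous hs).integrableOn,
    (deriv_sq_integrable hq hs).integrableOn, h0, rfl⟩

/-- If the infimum of `muSL` is positive, the one-dimensional energy densities are integrable:
otherwise the Bochner integral would take the junk value `0` and force `muSL L = 0`. -/
lemma energy_integrable (hm : 0 < sInf {m | ∃ L : ℝ, -1 < L ∧ m = muSL L})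
    {L : ℝ} (hL : -1 < L) {q : ℝ → ℝ} (hq : ContDiff ℝ 1 q) (hs : HasCompactSupport q) :
    IntegrableOn (fun t => (deriv q t) ^ 2 + lamR t * (q t) ^ 2) (Ioi L) := by
  by_contra hni
  by_cases h0 : (∫ t in Ioi L, (q t) ^ 2) = 0
  · apply hni
    rw [integral_eq_zero_iff_of_nonneg (fun t => sq_nonneg _)
      (sq_integrable hq.continuous hs).integrableOn] at h0
    refine (deriv_sq_integrable hq hs).integrableOn.congr ?_
    filter_upwards [h0] with t ht
    simp only [Pi.zero_apply] at ht
    rw [ht]; ring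
  · have := sInf_muSL_le_quot hL hq hs h0
    rw [integral_undef hni, zero_div] at this
    exact absurd this (not_le.2 hm)

lemma lamR_aemeasurable (hm : 0 < sInf {m | ∃ L : ℝ, -1 < L ∧ m = muSL L}) :
    AEMeasurable lamR (volume.restrict (Ioi (-1))) := by
  have hU : Ioi (-1 : ℝ) = ⋃ n : ℕ, Ioc (-1 + 1 / ((n : ℝ) + 1)) n := by
    ext t
    simp only [mem_Ioi, mem_iUnion, mem_Ioc]
    constructor
    · intro ht
      obtain ⟨a, ha⟩ := exists_nat_one_div_lt (show 0 < t + 1 by linarith)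
      obtain ⟨b, hb⟩ := exists_nat_ge t
      refine ⟨max a b, ?_, hb.trans (by exact_mod_cast le_max_right a b)⟩
      have : 1 / (((max a b : ℕ) : ℝ) + 1) ≤ 1 / ((a : ℝ) + 1) := by
        apply one_div_le_one_div_of_le (by positivity)
        have : (a : ℝ) ≤ ((max a b : ℕ) : ℝ) := by exact_mod_cast le_max_left a b
        linarith
      linarith
    · rintro ⟨n, h1, -⟩
      have : 0 < 1 / ((n : ℝ) + 1) := by positivity
      linarith
  rw [hU, aemeasurable_iUnion_iff]
  intro n
  have hpos : 0 < 1 / ((n : ℝ) + 1) := by positivity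
  -- a cutoff equal to `1` on `[-1, n]`
  let b : ContDiffBump (0 : ℝ) := ⟨n + 1, n + 2, by positivity, by linarith⟩
  have hI := energy_integrable hm (L := -1 + 1 / ((n : ℝ) + 1)) (by linarith)
    (q := b) b.contDiff b.hasCompactSupport
  have hI2 := (hI.sub (deriv_sq_integrable b.contDiff b.hasCompactSupport).integrableOn).mono_set
    (Ioc_subset_Ioi_self : Ioc (-1 + 1 / ((n : ℝ) + 1)) (n : ℝ) ⊆ _)
  refine hI2.aemeasurable.congr ?_
  filter_upwards [ae_restrict_mem measurableSet_Ioc] with t ht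
  have : b t = 1 := by
    apply b.one_of_mem_closedBall
    rw [mem_closedBall_zero_iff, Real.norm_eq_abs, abs_le]
    change -((n : ℝ) + 1) ≤ t ∧ t ≤ (n : ℝ) + 1
    have := ht.1
    have := ht.2
    have : (0 : ℝ) ≤ n := by positivity
    constructor <;> linarith
  simp [this]

/-- The Sturm–Liouville lower bound in Lebesgue-integral form. -/
lemma sturm_liouville_bound (hm : 0 < sInf {m | ∃ L : ℝ, -1 < L ∧ m = muSL L})
    {L : ℝ} (hL : -1 < L) {q : ℝ → ℝ} (hq : ContDiff ℝ 1 q) (hs : HasCompactSupport q) :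
    ENNReal.ofReal (sInf {m | ∃ L : ℝ, -1 < L ∧ m = muSL L}) *
      ∫⁻ t in Ioi L, ENNReal.ofReal ((q t) ^ 2) ≤
    ∫⁻ t in Ioi L, ENNReal.ofReal ((deriv q t) ^ 2 + lamR t * (q t) ^ 2) := by
  have hnn : ∀ t, 0 ≤ (deriv q t) ^ 2 + lamR t * (q t) ^ 2 := fun t => by
    have := lamR_nonneg t
    positivity
  rw [← ofReal_integral_eq_lintegral_ofReal (sq_integrable hq.continuous hs).integrableOn
      (Filter.Eventually.of_forall fun t => sq_nonneg _),
    ← ofReal_integral_eq_lintegral_ofReal (energy_integrable hm hL hq hs)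
      (Filter.Eventually.of_forall hnn), ← ENNReal.ofReal_mul hm.le]
  apply ENNReal.ofReal_le_ofReal
  by_cases h0 : (∫ t in Ioi L, (q t) ^ 2) = 0
  · rw [h0, mul_zero]
    exact integral_nonneg hnn
  · have hp : 0 < ∫ t in Ioi L, (q t) ^ 2 :=
      lt_of_le_of_ne (integral_nonneg fun t => sq_nonneg _) (Ne.symm h0)
    exact (le_div_iff₀ hp).1 (sInf_muSL_le_quot hL hq hs h0)

lemma gradSq2_integrable {w : ℝ × ℝ → ℝ} (hw : ContDiff ℝ 1 w) (hs : HasCompactSupport w) :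
    Integrable (gradSq2 w) := by
  have hd : ∀ e : ℝ × ℝ, Integrable fun p => (fderiv ℝ w p e) ^ 2 := fun e =>
    sq_integrable ((hw.continuous_fderiv one_ne_zero).clm_apply continuous_const)
      (hs.fderiv_apply ℝ e)
  exact (hd _).add (hd _)

/-- The cross-sectional lower bound in Lebesgue-integral form. -/
lemma cross_section_bound {t : ℝ} {w : ℝ × ℝ → ℝ} (hw : ContDiff ℝ 1 w)
    (hs : HasCompactSupport w) (hD : ∀ p ∈ DirB t, w p = 0) :
    ENNReal.ofReal (lamR t) * ∫⁻ p in GamR t, ENNReal.ofReal ((w p) ^ 2) ≤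
      ∫⁻ p in GamR t, ENNReal.ofReal (gradSq2 w p) := by
  rw [← ofReal_integral_eq_lintegral_ofReal (sq_integrable hw.continuous hs).integrableOn
      (Filter.Eventually.of_forall fun t => sq_nonneg _),
    ← ofReal_integral_eq_lintegral_ofReal (gradSq2_integrable hw hs).integrableOn
      (Filter.Eventually.of_forall (gradSq2_nonneg w)), ← ENNReal.ofReal_mul (lamR_nonneg t)]
  apply ENNReal.ofReal_le_ofReal
  by_cases h0 : (∫ p in GamR t, (w p) ^ 2) = 0
  · rw [h0, mul_zero]
    exact integral_nonneg (gradSq2_nonneg w)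
  · have hp : 0 < ∫ p in GamR t, (w p) ^ 2 :=
      lt_of_le_of_ne (integral_nonneg fun t => sq_nonneg _) (Ne.symm h0)
    refine (le_div_iff₀ hp).1 (csInf_le ⟨0, ?_⟩ ⟨w, ⟨hw, hD⟩, h0, rfl⟩)
    rintro r ⟨u, -, -, rfl⟩
    exact div_nonneg (integral_nonneg fun p => gradSq2_nonneg u p)
      (integral_nonneg fun p => sq_nonneg _)

/-! ### The energy bound where the third coordinate is the largest -/

/-- The part `{x ∈ Λ : x₃ > max(x₁,x₂)}` of the Fichera layer, in the coordinates
`((x₁,x₂),x₃)`; its section at height `t` is `Γ_t`. -/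
def OmP : Set ((ℝ × ℝ) × ℝ) := {x | x.1 ∈ GamR x.2}

/-- The squared gradient in the coordinates `((x₁,x₂),x₃)`. -/
def gradSqP (v : (ℝ × ℝ) × ℝ → ℝ) (x : (ℝ × ℝ) × ℝ) : ℝ :=
  (fderiv ℝ v x ((1, 0), 0)) ^ 2 + (fderiv ℝ v x ((0, 1), 0)) ^ 2 +
    (fderiv ℝ v x ((0, 0), 1)) ^ 2

lemma isOpen_OmP : IsOpen OmP := by
  have : OmP = {x : (ℝ × ℝ) × ℝ | -1 < x.1.1} ∩ {x | -1 < x.1.2} ∩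
      {x | min x.1.1 x.1.2 < 0} ∩ {x | x.1.1 < x.2} ∩ {x | x.1.2 < x.2} := by
    ext x
    simp only [OmP, mem_ofPred_eq, mem_GamR_iff, mem_inter_iff, min_lt_iff]
    tauto
  rw [this]
  refine ((((isOpen_lt ?_ ?_).inter (isOpen_lt ?_ ?_)).inter (isOpen_lt ?_ ?_)).inter
    (isOpen_lt ?_ ?_)).inter (isOpen_lt ?_ ?_) <;> fun_prop

/-- Integration over `OmP` by horizontal slices `Γ_t`. -/
lemma lintegral_OmP_horizontal {f : (ℝ × ℝ) × ℝ → ℝ≥0∞} (hf : Measurable f) :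
    ∫⁻ x in OmP, f x = ∫⁻ t, ∫⁻ p in GamR t, f (p, t) := by
  rw [← lintegral_indicator isOpen_OmP.measurableSet, Measure.volume_eq_prod,
    lintegral_prod_symm _ (hf.indicator isOpen_OmP.measurableSet).aemeasurable]
  refine lintegral_congr fun t => ?_
  rw [← lintegral_indicator (isOpen_GamR t).measurableSet]
  rfl

/-- Integration over `OmP` by vertical half-lines `(max(x₁,x₂), ∞)` over `Γ`. -/
lemma lintegral_OmP_vertical {f : (ℝ × ℝ) × ℝ → ℝ≥0∞} (hf : Measurable f) :
    ∫⁻ x in OmP, f x = ∫⁻ p in Gam, ∫⁻ t in Ioi (max p.1 p.2), f (p, t) := by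
  rw [← lintegral_indicator isOpen_OmP.measurableSet, Measure.volume_eq_prod,
    lintegral_prod _ (hf.indicator isOpen_OmP.measurableSet).aemeasurable,
    ← lintegral_indicator isOpen_Gam.measurableSet]
  refine lintegral_congr fun p => ?_
  by_cases hp : p ∈ Gam
  · rw [indicator_of_mem hp, ← lintegral_indicator measurableSet_Ioi]
    refine lintegral_congr fun t => ?_
    have : (p, t) ∈ OmP ↔ t ∈ Ioi (max p.1 p.2) := by
      simp only [Gam, mem_ofPred_eq, lt_min_iff, min_lt_iff] at hp
      simp only [OmP, mem_ofPred_eq, mem_GamR_iff, mem_Ioi, max_lt_iff]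
      tauto
    simp only [indicator, this]
  · rw [indicator_of_notMem hp]
    have : ∀ t, OmP.indicator f (p, t) = 0 := fun t =>
      indicator_of_notMem (fun h => hp h.1) f
    simp [this]

lemma fderiv_slice_horizontal {v : (ℝ × ℝ) × ℝ → ℝ} (hv : ContDiff ℝ 1 v) (p : ℝ × ℝ) (t : ℝ)
    (w : ℝ × ℝ) : fderiv ℝ (fun p => v (p, t)) p w = fderiv ℝ v (p, t) (w, 0) := by
  have h1 : HasFDerivAt v (fderiv ℝ v (p, t)) (p, t) :=
    (hv.differentiable one_ne_zero _).hasFDerivAt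
  have h2 := h1.comp p ((hasFDerivAt_id (𝕜 := ℝ) p).prodMk (hasFDerivAt_const t p))
  have h3 : fderiv ℝ (fun p => v (p, t)) p = _ := h2.fderiv
  rw [h3]
  simp

lemma deriv_slice_vertical {v : (ℝ × ℝ) × ℝ → ℝ} (hv : ContDiff ℝ 1 v) (p : ℝ × ℝ) (t : ℝ) :
    deriv (fun t => v (p, t)) t = fderiv ℝ v (p, t) ((0, 0), 1) := by
  have h1 : HasFDerivAt v (fderiv ℝ v (p, t)) (p, t) :=
    (hv.differentiable one_ne_zero _).hasFDerivAt
  exact (h1.comp_hasDerivAt t ((hasDerivAt_const t p).prodMk (hasDerivAt_id t))).deriv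

lemma hasCompactSupport_horizontal {v : (ℝ × ℝ) × ℝ → ℝ} (hs : HasCompactSupport v) (t : ℝ) :
    HasCompactSupport fun p => v (p, t) := by
  refine HasCompactSupport.intro (hs.isCompact.image continuous_fst) fun p hp => ?_
  by_contra h
  exact hp ⟨(p, t), subset_tsupport _ h, rfl⟩

lemma hasCompactSupport_vertical {v : (ℝ × ℝ) × ℝ → ℝ} (hs : HasCompactSupport v) (p : ℝ × ℝ) :
    HasCompactSupport fun t => v (p, t) := by
  refine HasCompactSupport.intro (hs.isCompact.image continuous_snd) fun t ht => ?_
  by_contra h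
  exact ht ⟨(p, t), subset_tsupport _ h, rfl⟩

/-- A point of the Dirichlet boundary of `Γ_t` lies in the open box but outside `Γ`. -/
lemma not_mem_of_mem_DirB {t : ℝ} {p : ℝ × ℝ} (hp : p ∈ DirB t) :
    p.1 < t ∧ p.2 < t ∧ p ∉ Gam := by
  obtain ⟨hF, hS⟩ := hp
  have hB : p ∉ frontier (Box (t + 1)) := fun h => hS ⟨hF, h⟩
  have hcl : p ∈ closure (Box (t + 1)) := closure_mono inter_subset_right hF.1
  have hbox : p ∈ Box (t + 1) := by
    by_contra h
    exact hB ⟨hcl, fun h' => h (interior_subset h')⟩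
  have hnot : p ∉ GamR t := fun h => hF.2 (by rwa [(isOpen_GamR t).interior_eq])
  refine ⟨?_, ?_, fun h => hnot ⟨h, hbox⟩⟩
  · have := (abs_lt.1 hbox.1).2; linarith
  · have := (abs_lt.1 hbox.2).2; linarith

/-- The energy bound on `{x ∈ Λ : x₃ > max(x₁,x₂)}`. -/
lemma OmP_bound (hm : 0 < sInf {m | ∃ L : ℝ, -1 < L ∧ m = muSL L})
    {v : (ℝ × ℝ) × ℝ → ℝ} (hv : ContDiff ℝ 1 v) (hs : HasCompactSupport v)
    (hD : ∀ p t, v (p, t) ≠ 0 → (p.1, p.2, t) ∈ Lam3) :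
    ENNReal.ofReal (sInf {m | ∃ L : ℝ, -1 < L ∧ m = muSL L}) *
      ∫⁻ x in OmP, ENNReal.ofReal ((v x) ^ 2) ≤ ∫⁻ x in OmP, ENNReal.ofReal (gradSqP v x) := by
  -- a measurable representative of the potential
  obtain ⟨g, hgm, hg⟩ := lamR_aemeasurable hm
  rw [Filter.EventuallyEq, ae_restrict_iff' measurableSet_Ioi] at hg
  have hd : ∀ e, Continuous fun x => (fderiv ℝ v x e) ^ 2 := fun e =>
    ((hv.continuous_fderiv one_ne_zero).clm_apply continuous_const).pow 2
  have hdm : ∀ e, Measurable fun x => ENNReal.ofReal ((fderiv ℝ v x e) ^ 2) := fun e =>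
    (hd e).measurable.ennreal_ofReal
  have hv2 : Measurable fun x => ENNReal.ofReal ((v x) ^ 2) :=
    (hv.continuous.pow 2).measurable.ennreal_ofReal
  have hgv : Measurable fun x : (ℝ × ℝ) × ℝ =>
      ENNReal.ofReal (g x.2) * ENNReal.ofReal ((v x) ^ 2) :=
    (hgm.comp measurable_snd).ennreal_ofReal.mul hv2
  have hhor : Measurable fun x => ENNReal.ofReal
      ((fderiv ℝ v x ((1, 0), 0)) ^ 2 + (fderiv ℝ v x ((0, 1), 0)) ^ 2) :=
    ((hd _).add (hd _)).measurable.ennreal_ofReal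
  -- cross sections bound the horizontal energy by the potential energy
  have hB : ∫⁻ x in OmP, ENNReal.ofReal (g x.2) * ENNReal.ofReal ((v x) ^ 2) ≤
      ∫⁻ x in OmP, ENNReal.ofReal
        ((fderiv ℝ v x ((1, 0), 0)) ^ 2 + (fderiv ℝ v x ((0, 1), 0)) ^ 2) := by
    rw [lintegral_OmP_horizontal hgv, lintegral_OmP_horizontal hhor]
    refine lintegral_mono_ae ?_
    filter_upwards [hg] with t ht
    by_cases h1 : -1 < t
    · rw [← ht h1, lintegral_const_mul' _ _ ENNReal.ofReal_ne_top]
      refine (cross_section_bound (w := fun p => v (p, t))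
        (hv.comp (contDiff_id.prodMk contDiff_const))
        (hasCompactSupport_horizontal hs t) fun p hp => ?_).trans_eq ?_
      · by_contra h
        obtain ⟨a, b, c⟩ := not_mem_of_mem_DirB hp
        have := hD p t h
        simp only [Lam3, mem_ofPred_eq, lt_min_iff, min_lt_iff] at this
        simp only [Gam, mem_ofPred_eq, lt_min_iff, min_lt_iff] at c
        grind
      · refine lintegral_congr fun p => ?_
        rw [gradSq2, fderiv_slice_horizontal hv, fderiv_slice_horizontal hv]
    · have : GamR t = ∅ := by
        ext p
        simp only [mem_GamR_iff, mem_empty_iff_false, iff_false]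
        grind
      simp [this]
  have hsplit : ∫⁻ x in OmP, ENNReal.ofReal (gradSqP v x) =
      (∫⁻ x in OmP, ENNReal.ofReal
        ((fderiv ℝ v x ((1, 0), 0)) ^ 2 + (fderiv ℝ v x ((0, 1), 0)) ^ 2)) +
      ∫⁻ x in OmP, ENNReal.ofReal ((fderiv ℝ v x ((0, 0), 1)) ^ 2) := by
    rw [← lintegral_add_left hhor]
    refine lintegral_congr fun x => ?_
    rw [gradSqP, ENNReal.ofReal_add (by positivity) (by positivity)]
  rw [hsplit]
  refine le_trans ?_ (add_le_add_left hB _)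
  rw [← lintegral_add_left hgv, lintegral_OmP_vertical (f := fun x : (ℝ × ℝ) × ℝ =>
      ENNReal.ofReal (g x.2) * ENNReal.ofReal ((v x) ^ 2) +
        ENNReal.ofReal ((fderiv ℝ v x ((0, 0), 1)) ^ 2)) (hgv.add (hdm _)),
    lintegral_OmP_vertical hv2, ← lintegral_const_mul' _ _ ENNReal.ofReal_ne_top]
  refine setLIntegral_mono' isOpen_Gam.measurableSet fun p hp => ?_
  have hL : -1 < max p.1 p.2 := hp.1.trans_le (min_le_left _ _ |>.trans (le_max_left _ _))
  refine (sturm_liouville_bound hm hL (q := fun t => v (p, t))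
    (hv.comp (contDiff_const.prodMk contDiff_id))
    (hasCompactSupport_vertical hs p)).trans_eq ?_
  refine lintegral_congr_ae ?_
  filter_upwards [ae_restrict_of_ae hg, ae_restrict_mem measurableSet_Ioi] with t ht htL
  have h1 : -1 < t := hL.trans htL
  rw [deriv_slice_vertical hv, ← ht h1, ENNReal.ofReal_add (by positivity)
    (mul_nonneg (lamR_nonneg t) (sq_nonneg _)), ENNReal.ofReal_mul (lamR_nonneg t), add_comm]

/-! ### Coordinate permutations -/

/-- `((a,b),t) ↦ (a,b,t)`. -/
def perm3 : ((ℝ × ℝ) × ℝ) ≃L[ℝ] (ℝ × ℝ × ℝ) where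
  toFun x := (x.1.1, x.1.2, x.2)
  invFun y := ((y.1, y.2.1), y.2.2)
  map_add' _ _ := rfl
  map_smul' _ _ := rfl
  left_inv _ := rfl
  right_inv _ := rfl
  continuous_toFun := by fun_prop
  continuous_invFun := by fun_prop

/-- `((a,b),t) ↦ (a,t,b)`. -/
def perm2 : ((ℝ × ℝ) × ℝ) ≃L[ℝ] (ℝ × ℝ × ℝ) where
  toFun x := (x.1.1, x.2, x.1.2)
  invFun y := ((y.1, y.2.2), y.2.1)
  map_add' _ _ := rfl
  map_smul' _ _ := rfl
  left_inv _ := rfl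
  right_inv _ := rfl
  continuous_toFun := by fun_prop
  continuous_invFun := by fun_prop

/-- `((a,b),t) ↦ (t,a,b)`. -/
def perm1 : ((ℝ × ℝ) × ℝ) ≃L[ℝ] (ℝ × ℝ × ℝ) where
  toFun x := (x.2, x.1.1, x.1.2)
  invFun y := ((y.2.1, y.2.2), y.1)
  map_add' _ _ := rfl
  map_smul' _ _ := rfl
  left_inv _ := rfl
  right_inv _ := rfl
  continuous_toFun := by fun_prop
  continuous_invFun := by fun_prop

lemma perm3_mp : MeasurePreserving perm3 volume volume :=
  volume_preserving_prodAssoc (α₁ := ℝ) (β₁ := ℝ) (γ₁ := ℝ)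

lemma perm2_mp : MeasurePreserving perm2 volume volume :=
  ((MeasurePreserving.id (volume : Measure ℝ)).prod
    (Measure.measurePreserving_swap (μ := (volume : Measure ℝ)) (ν := volume))).comp perm3_mp

lemma perm1_mp : MeasurePreserving perm1 volume volume :=
  Measure.measurePreserving_swap (μ := (volume : Measure (ℝ × ℝ))) (ν := (volume : Measure ℝ))

/-- The energy bound transported by a coordinate permutation `e`, on the part of `Λ` that `e`
identifies with `OmP`. -/
lemma piece_bound (hm : 0 < sInf {m | ∃ L : ℝ, -1 < L ∧ m = muSL L})
    {u : ℝ × ℝ × ℝ → ℝ} (hu : ContDiff ℝ 1 u) (hs : HasCompactSupport u)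
    (hD : tsupport u ⊆ Lam3) (e : ((ℝ × ℝ) × ℝ) ≃L[ℝ] (ℝ × ℝ × ℝ))
    (he : MeasurePreserving e volume volume)
    (hΛ : ∀ p t, e (p, t) ∈ Lam3 → (p.1, p.2, t) ∈ Lam3)
    (hgrad : ∀ A : (ℝ × ℝ × ℝ) →L[ℝ] ℝ,
      (A (e ((1, 0), 0))) ^ 2 + (A (e ((0, 1), 0))) ^ 2 + (A (e ((0, 0), 1))) ^ 2 =
      (A (1, 0, 0)) ^ 2 + (A (0, 1, 0)) ^ 2 + (A (0, 0, 1)) ^ 2)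
    {S : Set (ℝ × ℝ × ℝ)} (hS : e ⁻¹' S = OmP) :
    ENNReal.ofReal (sInf {m | ∃ L : ℝ, -1 < L ∧ m = muSL L}) *
      ∫⁻ x in S, ENNReal.ofReal ((u x) ^ 2) ≤ ∫⁻ x in S, ENNReal.ofReal (gradSq3 u x) := by
  have hemb : MeasurableEmbedding e := e.toHomeomorph.measurableEmbedding
  have h := OmP_bound hm (v := u ∘ e) (hu.comp e.contDiff)
    (hs.comp_homeomorph e.toHomeomorph)
    (fun p t h => hΛ p t (hD (subset_tsupport u h)))
  rw [← hS] at h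
  have hg : ∀ x, gradSqP (u ∘ e) x = gradSq3 u (e x) := fun x => by
    have : fderiv ℝ (u ∘ e) x = (fderiv ℝ u (e x)).comp (e : _ →L[ℝ] _) :=
      e.comp_right_fderiv
    rw [gradSqP, this]
    exact hgrad _
  simp only [hg, Function.comp_apply] at h
  rwa [he.setLIntegral_comp_preimage_emb hemb (fun x => ENNReal.ofReal ((u x) ^ 2)),
    he.setLIntegral_comp_preimage_emb hemb (fun x => ENNReal.ofReal (gradSq3 u x))] at h

/-! ### Decomposition of the layer -/

/-- The part of `Λ` where the third coordinate is the largest. -/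
def Part3 : Set (ℝ × ℝ × ℝ) := {x | (x.1, x.2.1) ∈ GamR x.2.2}

/-- The part of `Λ` where the second coordinate is the largest. -/
def Part2 : Set (ℝ × ℝ × ℝ) := {x | (x.1, x.2.2) ∈ GamR x.2.1}

/-- The part of `Λ` where the first coordinate is the largest. -/
def Part1 : Set (ℝ × ℝ × ℝ) := {x | (x.2.1, x.2.2) ∈ GamR x.1}

lemma ker_null (A : (ℝ × ℝ × ℝ) →ₗ[ℝ] ℝ) (y : ℝ × ℝ × ℝ) (hy : A y ≠ 0) :
    ∀ᵐ x : ℝ × ℝ × ℝ, A x ≠ 0 := by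
  have : (volume : Measure (ℝ × ℝ × ℝ)) (A.ker : Set (ℝ × ℝ × ℝ)) = 0 := by
    have : (volume : Measure (ℝ × ℝ × ℝ)).IsAddHaarMeasure := by
      have : (volume : Measure (ℝ × ℝ)).IsAddHaarMeasure := inferInstance
      exact Measure.prod.instIsAddHaarMeasure (volume : Measure ℝ) (volume : Measure (ℝ × ℝ))
    refine Measure.addHaar_submodule _ _ fun h => hy ?_
    have : y ∈ A.ker := h ▸ Submodule.mem_top
    exact this
  rw [ae_iff]
  convert this using 2
  ext x
  simp

/-- Up to the null set where two coordinates agree, `Λ` is covered by its three parts. -/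
lemma Lam3_ae_eq : Lam3 =ᵐ[volume] (Part3 ∪ Part2 ∪ Part1 : Set (ℝ × ℝ × ℝ)) := by
  let X : (ℝ × ℝ × ℝ) →ₗ[ℝ] ℝ := LinearMap.fst ℝ ℝ (ℝ × ℝ)
  let Y : (ℝ × ℝ × ℝ) →ₗ[ℝ] ℝ := LinearMap.fst ℝ ℝ ℝ ∘ₗ LinearMap.snd ℝ ℝ (ℝ × ℝ)
  let Z : (ℝ × ℝ × ℝ) →ₗ[ℝ] ℝ := LinearMap.snd ℝ ℝ ℝ ∘ₗ LinearMap.snd ℝ ℝ (ℝ × ℝ)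
  filter_upwards [ker_null (X - Y) (1, 0, 0) (by simp [X, Y]),
    ker_null (X - Z) (1, 0, 0) (by simp [X, Z]),
    ker_null (Y - Z) (0, 1, 0) (by simp [Y, Z])] with x h1 h2 h3
  simp only [X, Y, Z, LinearMap.sub_apply, LinearMap.coe_comp, Function.comp_apply,
    LinearMap.fst_apply, LinearMap.snd_apply, sub_ne_zero] at h1 h2 h3
  refine propext ?_
  change x ∈ Lam3 ↔ x ∈ Part3 ∪ Part2 ∪ Part1
  simp only [Lam3, Part1, Part2, Part3, mem_union, mem_ofPred_eq, mem_GamR_iff, lt_min_iff,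
    min_lt_iff]
  grind

lemma lintegral_Lam3 (f : ℝ × ℝ × ℝ → ℝ≥0∞) :
    ∫⁻ x in Lam3, f x =
      (∫⁻ x in Part3, f x) + (∫⁻ x in Part2, f x) + ∫⁻ x in Part1, f x := by
  have m2 : MeasurableSet Part2 :=
    perm2.toHomeomorph.symm.measurableEmbedding.measurable isOpen_OmP.measurableSet
  have m1 : MeasurableSet Part1 :=
    perm1.toHomeomorph.symm.measurableEmbedding.measurable isOpen_OmP.measurableSet
  rw [setLIntegral_congr Lam3_ae_eq, lintegral_union m1, lintegral_union m2]
  · rw [Set.disjoint_left]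
    intro x h h'
    simp only [Part2, Part3, mem_ofPred_eq, mem_GamR_iff] at h h'
    grind
  · rw [Set.disjoint_left]
    intro x h h'
    simp only [Part1, Part2, Part3, mem_union, mem_ofPred_eq, mem_GamR_iff] at h h'
    grind

lemma Lam3_bound (hm : 0 < sInf {m | ∃ L : ℝ, -1 < L ∧ m = muSL L})
    {u : ℝ × ℝ × ℝ → ℝ} (hu : ContDiff ℝ 1 u) (hs : HasCompactSupport u)
    (hD : tsupport u ⊆ Lam3) :
    sInf {m | ∃ L : ℝ, -1 < L ∧ m = muSL L} * ∫ x in Lam3, (u x) ^ 2 ≤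
      ∫ x in Lam3, gradSq3 u x := by
  have hd : ∀ e : ℝ × ℝ × ℝ, Integrable fun p => (fderiv ℝ u p e) ^ 2 := fun e =>
    sq_integrable ((hu.continuous_fderiv one_ne_zero).clm_apply continuous_const)
      (hs.fderiv_apply ℝ e)
  have hG : Integrable (gradSq3 u) := ((hd _).add (hd _)).add (hd _)
  rw [← ENNReal.ofReal_le_ofReal_iff (integral_nonneg (gradSq3_nonneg u)),
    ENNReal.ofReal_mul hm.le,
    ofReal_integral_eq_lintegral_ofReal (sq_integrable hu.continuous hs).integrableOn
      (Filter.Eventually.of_forall fun t => sq_nonneg _),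
    ofReal_integral_eq_lintegral_ofReal hG.integrableOn
      (Filter.Eventually.of_forall (gradSq3_nonneg u)), lintegral_Lam3, lintegral_Lam3,
    mul_add, mul_add]
  refine add_le_add (add_le_add ?_ ?_) ?_
  · exact piece_bound hm hu hs hD perm3 perm3_mp (fun p t h => h) (fun A => rfl) rfl
  · refine piece_bound hm hu hs hD perm2 perm2_mp (fun p t h => ?_) (fun A => ?_) rfl
    · change (p.1, t, p.2) ∈ Lam3 at h
      simp only [Lam3, mem_ofPred_eq, lt_min_iff, min_lt_iff] at h ⊢
      tauto
    · change (A (1, 0, 0)) ^ 2 + (A (0, 0, 1)) ^ 2 + (A (0, 1, 0)) ^ 2 = _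
      ring
  · refine piece_bound hm hu hs hD perm1 perm1_mp (fun p t h => ?_) (fun A => ?_) rfl
    · change (t, p.1, p.2) ∈ Lam3 at h
      simp only [Lam3, mem_ofPred_eq, lt_min_iff, min_lt_iff] at h ⊢
      tauto
    · change (A (0, 1, 0)) ^ 2 + (A (0, 0, 1)) ^ 2 + (A (1, 0, 0)) ^ 2 = _
      ring

/-- There is a test function on `Λ`, so that `lamLam` is not the infimum of the empty set. -/
lemma exists_test_function : ∃ u : ℝ × ℝ × ℝ → ℝ, ContDiff ℝ 1 u ∧ HasCompactSupport u ∧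
    tsupport u ⊆ Lam3 ∧ (∫ x in Lam3, (u x) ^ 2) ≠ 0 := by
  have hx : ((-1 / 2, 0, 0) : ℝ × ℝ × ℝ) ∈ Lam3 := by
    simp only [Lam3, mem_ofPred_eq, lt_min_iff, min_lt_iff]
    norm_num
  obtain ⟨u, hD, hs, hu, -, h1⟩ := exists_contDiff_tsupport_subset (n := 1)
    (isOpen_Lam3.mem_nhds hx)
  refine ⟨u, hu, hs, hD, ?_⟩
  have : ∫ x in Lam3, (u x) ^ 2 = ∫ x, (u x) ^ 2 := by
    refine setIntegral_eq_integral_of_forall_compl_eq_zero fun x hx' => ?_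
    have : u x = 0 := by
      by_contra h
      exact hx' (hD (subset_tsupport u h))
    simp [this]
  rw [this]
  have hc : Continuous fun x => (u x) ^ 2 := hu.continuous.pow 2
  refine (hc.integral_pos_of_hasCompactSupport_nonneg_nonzero (hasCompactSupport_sq hs) (fun x => sq_nonneg _)
    (x := (-1 / 2, 0, 0)) ?_).ne'
  simp [h1]

/-- Proposition 3.8, (3.15): the first Rayleigh quotient of the
Dirichlet Laplacian on the Fichera layer admits the lower bound
`λ₁(Λ) ≥ inf_{L>−1} μ(L)`, where `μ(L)` is the ground energy of the Sturm–Liouville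
operator `q ↦ -q'' + λ q` on `(L,∞)` with potential `λ(t) = λ₁(Γ_t)`. -/
theorem lamLam_lower_bound :
    sInf {m | ∃ L : ℝ, -1 < L ∧ m = muSL L} ≤ lamLam := by
  obtain ⟨u₀, h₁, h₂, h₃, h₄⟩ := exists_test_function
  refine le_csInf ⟨_, u₀, h₁, h₂, h₃, h₄, rfl⟩ ?_
  rintro r ⟨u, hu, hs, hD, h0, rfl⟩
  rcases le_or_gt (sInf {m | ∃ L : ℝ, -1 < L ∧ m = muSL L}) 0 with hm | hm
  · exact hm.trans (div_nonneg (integral_nonneg (gradSq3_nonneg u))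
      (integral_nonneg fun x => sq_nonneg _))
  · have hp : 0 < ∫ x in Lam3, (u x) ^ 2 :=
      lt_of_le_of_ne (integral_nonneg fun x => sq_nonneg _) (Ne.symm h0)
    exact (le_div_iff₀ hp).2 (Lam3_bound hm hu hs hD)
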